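/- Let n ≥ 3, let A be an n-by-n reciprocal matrix, let w = (w_1, …, w_{n−1}) be a positive vector such that the digraph G(A(n), w) is strongly connected, and let x > 0 with w_x = (w_1, …, w_{n−1}, x). Then G(A, w_x) is strongly connected if and only if vertex n has at least one outgoing edge and at least one incoming edge in G(A, w_x); equivalently, if and only if among the numbers w_i/x − a_{in}, i = 1, …, n−1, there are both a nonnegative one and a nonpositive one. -/

import Mathlib

/-- An n-by-n positive matrix is reciprocal if `A j i = 1 / A i j` for all `i, j`. -/
def Reciprocal {n : ℕ} (A : Matrix (Fin n) (Fin n) ℝ) : Prop :=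
  (∀ i j, 0 < A i j) ∧ ∀ i j, A j i = 1 / A i j

/-- The edge relation of the digraph `G(A,w)`: there is a directed edge `i → j`
(for `i ≠ j`) exactly when `w i / w j ≥ A i j`. -/
def GEdge {n : ℕ} (A : Matrix (Fin n) (Fin n) ℝ) (w : Fin n → ℝ) (i j : Fin n) : Prop :=
  i ≠ j ∧ A i j ≤ w i / w j

/-- A digraph on `Fin n` is strongly connected if for every ordered pair of distinct
vertices there is a directed path from the first to the second. -/
def StronglyConnected {n : ℕ} (e : Fin n → Fin n → Prop) : Prop :=
  ∀ i j : Fin n, i ≠ j → Relation.TransGen e i j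

/-!
Paths of `G(A(n), w)` remain paths of the larger digraph, so an edge out of `n` lets `n` reach every
other vertex and an edge into `n` lets every other vertex reach `n`. Reciprocity turns
`a_{ni} ≤ x / w_i` into `w_i / x ≤ a_{in}`, so both kinds of edges can be read off column `n`.
-/

open Relation

section Relation

variable {α : Type*} {r : α → α → Prop}

theorem exists_edges_of_pairwise_transGen [Nontrivial α] (h : Pairwise (TransGen r)) (v : α) :
    (∃ a, r v a) ∧ ∃ a, r a v := by
  obtain ⟨u, huv⟩ := exists_ne v
  obtain ⟨a, hva, -⟩ := TransGen.head'_iff.1 (h huv.symm)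
  obtain ⟨b, -, hbv⟩ := TransGen.tail'_iff.1 (h huv)
  exact ⟨⟨a, hva⟩, b, hbv⟩

theorem pairwise_transGen_of_compl_singleton [Std.Irrefl r] {v : α}
    (h : ({v}ᶜ : Set α).Pairwise (TransGen r)) (hout : ∃ a, r v a) (hin : ∃ a, r a v) :
    Pairwise (TransGen r) := by
  obtain ⟨a, hva⟩ := hout
  obtain ⟨b, hbv⟩ := hin
  have from_v (j : α) (hj : j ≠ v) : TransGen r v j := by
    obtain rfl | haj := eq_or_ne a j
    · exact .single hva
    · exact .head hva (h (ne_of_irrefl' hva) hj haj)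
  have to_v (i : α) (hi : i ≠ v) : TransGen r i v := by
    obtain rfl | hib := eq_or_ne i b
    · exact .single hbv
    · exact .tail (h hi (ne_of_irrefl hbv) hib) hbv
  intro i j hij
  obtain rfl | hi := eq_or_ne i v
  · exact from_v j hij.symm
  obtain rfl | hj := eq_or_ne j v
  · exact to_v i hij
  exact h hi hj hij

theorem StronglyConnected.pairwise_transGen_range {n : ℕ} {e : Fin n → Fin n → Prop}
    (he : StronglyConnected e) {f : Fin n → α} (hf : ∀ i j, e i j → r (f i) (f j)) :
    (Set.range f).Pairwise (TransGen r) := by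
  rintro _ ⟨i, rfl⟩ _ ⟨j, rfl⟩ hij
  exact (he i j (ne_of_apply_ne f hij)).lift f hf

end Relation

section GEdge

variable {m n : ℕ} {A : Matrix (Fin n) (Fin n) ℝ} {w : Fin n → ℝ} {i j : Fin n}

instance : Std.Irrefl (GEdge A w) := ⟨fun _ h => h.1 rfl⟩

theorem gEdge_submatrix_iff {f : Fin m → Fin n} (hf : f.Injective) {k l : Fin m} :
    GEdge (A.submatrix f f) (w ∘ f) k l ↔ GEdge A w (f k) (f l) :=
  and_congr_left' hf.ne_iff.symm

theorem gEdge_iff_sub_nonneg (hij : i ≠ j) : GEdge A w i j ↔ 0 ≤ w i / w j - A i j := by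
  rw [GEdge, and_iff_right hij, sub_nonneg]

theorem Reciprocal.gEdge_swap_iff_sub_nonpos (hA : Reciprocal A) (hi : 0 < w i) (hj : 0 < w j)
    (hij : i ≠ j) : GEdge A w j i ↔ w i / w j - A i j ≤ 0 := by
  rw [GEdge, and_iff_right hij.symm, hA.2 i j, one_div_le (hA.1 i j) (div_pos hj hi), one_div_div,
    sub_nonpos]

end GEdge

section DeletedVertex

variable {n : ℕ} {A : Matrix (Fin (n + 1)) (Fin (n + 1)) ℝ} {w : Fin (n + 1) → ℝ}

theorem stronglyConnected_gEdge_iff_exists_edges (hn : 0 < n) (p : Fin (n + 1))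
    (hconn : StronglyConnected
      (GEdge (A.submatrix p.succAbove p.succAbove) (w ∘ p.succAbove))) :
    StronglyConnected (GEdge A w) ↔ (∃ j, GEdge A w p j) ∧ ∃ j, GEdge A w j p := by
  have : Nontrivial (Fin (n + 1)) := Fin.nontrivial_iff_two_le.2 (by lia)
  have hcompl : ({p}ᶜ : Set (Fin (n + 1))).Pairwise (TransGen (GEdge A w)) := by
    rw [← Fin.range_succAbove]
    exact hconn.pairwise_transGen_range
      fun _ _ => (gEdge_submatrix_iff p.succAbove_right_injective).1
  exact ⟨fun h => exists_edges_of_pairwise_transGen h p,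
    fun ⟨hout, hin⟩ => pairwise_transGen_of_compl_singleton hcompl hout hin⟩

theorem exists_gEdge_to_iff (p : Fin (n + 1)) :
    (∃ j, GEdge A w j p) ↔
      ∃ i, 0 ≤ w (p.succAbove i) / w p - A (p.succAbove i) p := by
  rw [Fin.exists_iff_succAbove p, or_iff_right (irrefl p)]
  exact exists_congr fun i => gEdge_iff_sub_nonneg (p.succAbove_ne i)

theorem Reciprocal.exists_gEdge_from_iff (hA : Reciprocal A) (hw : ∀ i, 0 < w i)
    (p : Fin (n + 1)) :
    (∃ j, GEdge A w p j) ↔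
      ∃ i, w (p.succAbove i) / w p - A (p.succAbove i) p ≤ 0 := by
  rw [Fin.exists_iff_succAbove p, or_iff_right (irrefl p)]
  exact exists_congr fun i => hA.gEdge_swap_iff_sub_nonpos (hw _) (hw _) (p.succAbove_ne i)

end DeletedVertex

/-- If `G(A(n), w)` is strongly connected then `G(A, (w, x))` is strongly connected iff
the last vertex has an outgoing and an incoming edge; equivalently, iff among the numbers
`w i / x - A i n` there are both a nonnegative one and a nonpositive one. -/
theorem stmt_16 {n : ℕ} (hn : 2 ≤ n) (A : Matrix (Fin (n + 1)) (Fin (n + 1)) ℝ)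
    (hA : Reciprocal A) (w : Fin n → ℝ) (hw : ∀ i, 0 < w i)
    (hconn : StronglyConnected (GEdge (fun i j : Fin n => A i.castSucc j.castSucc) w))
    (x : ℝ) (hx : 0 < x) :
    (StronglyConnected (GEdge A (Fin.snoc w x)) ↔
      ((∃ j : Fin (n + 1), GEdge A (Fin.snoc w x) (Fin.last n) j) ∧
        ∃ j : Fin (n + 1), GEdge A (Fin.snoc w x) j (Fin.last n))) ∧
    (StronglyConnected (GEdge A (Fin.snoc w x)) ↔
      ((∃ i : Fin n, 0 ≤ w i / x - A i.castSucc (Fin.last n)) ∧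
        ∃ i : Fin n, w i / x - A i.castSucc (Fin.last n) ≤ 0)) := by
  have hw_snoc : ∀ i, 0 < (Fin.snoc w x : Fin (n + 1) → ℝ) i :=
    Fin.forall_fin_succ'.2 ⟨by simpa using hw, by simpa using hx⟩
  have hconn_del : StronglyConnected (GEdge
      (A.submatrix (Fin.last n).succAbove (Fin.last n).succAbove)
      ((Fin.snoc w x : Fin (n + 1) → ℝ) ∘ (Fin.last n).succAbove)) := by
    rw [Fin.succAbove_last, Fin.snoc_comp_castSucc]
    exact hconn
  have hedges := stronglyConnected_gEdge_iff_exists_edges (by lia) (Fin.last n) hconn_del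
  refine ⟨hedges, hedges.trans ?_⟩
  rw [hA.exists_gEdge_from_iff hw_snoc, exists_gEdge_to_iff, and_comm]
  simp only [Fin.succAbove_last, Fin.snoc_castSucc, Fin.snoc_last]
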